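/- Fix S ⊆ N and j ∉ S, let T := S ∪ {j} and a := A^S_{jj}. Then a ≠ 0, and the matrix A^T is obtained from A^S by a simplex pivot on the (j,j) entry: A^T_{ik} = A^S_{ik} − A^S_{ij} A^S_{jk} / a for all i ≠ j and k ≠ j; A^T_{ij} = A^S_{ij} / a for all i ≠ j; A^T_{jk} = −A^S_{jk} / a for all k ≠ j; and A^T_{jj} = 1/a. (The pivoted parametric simplex tableau for S equals the tableau for S ∪ {j}, Table 3 of the paper.) -/

import Mathlib

open Matrix BigOperators
open scoped Classical

noncomputable section

/-- Transition matrix of the `S`-active policy: row `i` of `P` if `i ∈ S`,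
the `i`-th standard unit row otherwise. -/
def PAct {N : Type*} [DecidableEq N] (P : Matrix N N ℝ) (S : Finset N) : Matrix N N ℝ :=
  fun i j => if i ∈ S then P i j else if i = j then 1 else 0

/-- Transition matrix of the `Sᶜ`-active policy. -/
def PPas {N : Type*} [DecidableEq N] (P : Matrix N N ℝ) (S : Finset N) : Matrix N N ℝ :=
  fun i j => if i ∈ S then (if i = j then 1 else 0) else P i j

/-- Basis matrix `B^S = I - β P^S`. -/
def BMat {N : Type*} [Fintype N] [DecidableEq N] (β : ℝ) (P : Matrix N N ℝ) (S : Finset N) :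
    Matrix N N ℝ := 1 - β • PAct P S

/-- Non-basic matrix `N^S = I - β P^{Sᶜ}`. -/
def NMat {N : Type*} [Fintype N] [DecidableEq N] (β : ℝ) (P : Matrix N N ℝ) (S : Finset N) :
    Matrix N N ℝ := 1 - β • PPas P S

/-- Basis inverse `H^S = (B^S)⁻¹`. -/
def HMat {N : Type*} [Fintype N] [DecidableEq N] (β : ℝ) (P : Matrix N N ℝ) (S : Finset N) :
    Matrix N N ℝ := (BMat β P S)⁻¹

/-- Tableau matrix `A^S = N^S · H^S`. -/
def AMat {N : Type*} [Fintype N] [DecidableEq N] (β : ℝ) (P : Matrix N N ℝ) (S : Finset N) :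
    Matrix N N ℝ := NMat β P S * HMat β P S

/-- Work measure `g^S = H^S · 1_S`. -/
def gWork {N : Type*} [Fintype N] [DecidableEq N] (β : ℝ) (P : Matrix N N ℝ) (S : Finset N) :
    N → ℝ := (HMat β P S).mulVec (fun j => if j ∈ S then 1 else 0)

/-- Reward measure `f^S = H^S · (R·1_S)`. -/
def fRew {N : Type*} [Fintype N] [DecidableEq N] (β : ℝ) (P : Matrix N N ℝ) (R : N → ℝ)
    (S : Finset N) : N → ℝ := (HMat β P S).mulVec (fun j => if j ∈ S then R j else 0)

/-- Marginal work `w_i^S`. -/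
def wMarg {N : Type*} [Fintype N] [DecidableEq N] (β : ℝ) (P : Matrix N N ℝ) (S : Finset N)
    (i : N) : ℝ :=
  if i ∈ S then (1 - β) * gWork β P S i
  else 1 + β * ∑ j ∈ S, P i j * gWork β P S j

/-- Marginal reward `r_i^S`. -/
def rMarg {N : Type*} [Fintype N] [DecidableEq N] (β : ℝ) (P : Matrix N N ℝ) (R : N → ℝ)
    (S : Finset N) (i : N) : ℝ :=
  if i ∈ S then (1 - β) * fRew β P R S i
  else R i + β * ∑ j ∈ S, P i j * fRew β P R S j

/-- Marginal productivity rate `ν_i^S = r_i^S / w_i^S`. -/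
def nuMarg {N : Type*} [Fintype N] [DecidableEq N] (β : ℝ) (P : Matrix N N ℝ) (R : N → ℝ)
    (S : Finset N) (i : N) : ℝ := rMarg β P R S i / wMarg β P S i

/-- Feasibility of a pair of row vectors `(x⁰, x¹)` for initial state `i`:
`x⁰, x¹ ≥ 0` and `(1-β) x⁰ + x¹ (I - β P) = e_i`. -/
def Feasible {N : Type*} [Fintype N] [DecidableEq N] (β : ℝ) (P : Matrix N N ℝ) (i : N)
    (x0 x1 : N → ℝ) : Prop :=
  (∀ j, 0 ≤ x0 j) ∧ (∀ j, 0 ≤ x1 j) ∧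
    (1 - β) • x0 + Matrix.vecMul x1 (1 - β • P) = Pi.single i 1

/-- Modified reward vector `R̂ = R - (I - βP)·Q`. -/
def Rhat {N : Type*} [Fintype N] [DecidableEq N] (β : ℝ) (P : Matrix N N ℝ) (R Q : N → ℝ) :
    N → ℝ := fun i => R i - ((1 - β • P).mulVec Q) i

theorem PAct_nonneg' {N : Type*} [DecidableEq N]
    (P : Matrix N N ℝ) (hP0 : ∀ i j, 0 ≤ P i j) (S : Finset N) (i k : N) :
    0 ≤ PAct P S i k := by
  unfold PAct
  split_ifs
  · exact hP0 i k
  · exact zero_le_one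
  · exact le_rfl

theorem PAct_sum' {N : Type*} [Fintype N] [DecidableEq N]
    (P : Matrix N N ℝ) (hP1 : ∀ i, ∑ j, P i j = 1) (S : Finset N) (i : N) :
    ∑ k, PAct P S i k = 1 := by
  unfold PAct
  by_cases h : i ∈ S
  · simp [h, hP1]
  · simp [h]

theorem BMat_det_ne {N : Type*} [Fintype N] [DecidableEq N]
    (P : Matrix N N ℝ) (hP0 : ∀ i j, 0 ≤ P i j) (hP1 : ∀ i, ∑ j, P i j = 1)
    (β : ℝ) (hβ0 : 0 < β) (hβ1 : β < 1) (S : Finset N) : (BMat β P S).det ≠ 0 := by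
  apply det_ne_zero_of_sum_row_lt_diag
  intro k
  have hs := PAct_sum' P hP1 S k
  rw [← Finset.add_sum_erase _ _ (Finset.mem_univ k)] at hs
  have h1 : ∑ l ∈ Finset.univ.erase k, ‖BMat β P S k l‖
      = β * ∑ l ∈ Finset.univ.erase k, PAct P S k l := by
    rw [Finset.mul_sum]
    refine Finset.sum_congr rfl fun l hl => ?_
    have hne : k ≠ l := (Finset.ne_of_mem_erase hl).symm
    have := mul_nonneg hβ0.le (PAct_nonneg' P hP0 S k l)
    simp [BMat, Matrix.one_apply_ne hne, abs_of_nonneg hβ0.le,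
      abs_of_nonneg (PAct_nonneg' P hP0 S k l)]
  rw [h1]
  have h2 : BMat β P S k k = 1 - β * PAct P S k k := by simp [BMat]
  rw [h2]
  refine lt_of_lt_of_le ?_ (le_abs_self _)
  nlinarith

theorem AMat_row {N : Type*} [Fintype N] [DecidableEq N]
    (P : Matrix N N ℝ) (hP0 : ∀ i j, 0 ≤ P i j) (hP1 : ∀ i, ∑ j, P i j = 1)
    (β : ℝ) (hβ0 : 0 < β) (hβ1 : β < 1) (S : Finset N) : AMat β P S * BMat β P S = NMat β P S := by
  have h := BMat_det_ne P hP0 hP1 β hβ0 hβ1 S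
  unfold AMat HMat
  rw [Matrix.mul_assoc, Matrix.nonsing_inv_mul _ (isUnit_iff_ne_zero.mpr h), Matrix.mul_one]

/-- Table 3: the tableau for `S ∪ {j}` is obtained from that for `S`
by a simplex pivot on the `(j,j)` entry. -/
theorem stmt11 {N : Type*} [Fintype N] [DecidableEq N] [Nonempty N]
    (P : Matrix N N ℝ) (hP0 : ∀ i j, 0 ≤ P i j) (hP1 : ∀ i, ∑ j, P i j = 1)
    (β : ℝ) (hβ0 : 0 < β) (hβ1 : β < 1)
    (S : Finset N) (j : N) (hj : j ∉ S) :
    AMat β P S j j ≠ 0 ∧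
    (∀ i k : N, i ≠ j → k ≠ j →
      AMat β P (insert j S) i k
        = AMat β P S i k - AMat β P S i j * AMat β P S j k / AMat β P S j j) ∧
    (∀ i : N, i ≠ j →
      AMat β P (insert j S) i j = AMat β P S i j / AMat β P S j j) ∧
    (∀ k : N, k ≠ j →
      AMat β P (insert j S) j k = - AMat β P S j k / AMat β P S j j) ∧
    AMat β P (insert j S) j j = 1 / AMat β P S j j := by
  have hA := AMat_row P hP0 hP1 β hβ0 hβ1 S
  have hAT := AMat_row P hP0 hP1 β hβ0 hβ1 (insert j S)
  have hdet := BMat_det_ne P hP0 hP1 β hβ0 hβ1 (insert j S)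
  have hBj : ∀ l, BMat β P (insert j S) j l = NMat β P S j l := by
    intro l; simp [BMat, NMat, PAct, PPas, hj]
  have hNj : ∀ l, NMat β P (insert j S) j l = BMat β P S j l := by
    intro l; simp [BMat, NMat, PAct, PPas, hj]
  have hB : ∀ i l, i ≠ j → BMat β P (insert j S) i l = BMat β P S i l := by
    intro i l hi; simp [BMat, PAct, hi]
  have hN : ∀ i l, i ≠ j → NMat β P (insert j S) i l = NMat β P S i l := by
    intro i l hi; simp [NMat, PPas, hi]
  generalize AMat β P S = A at *
  generalize AMat β P (insert j S) = A' at *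
  generalize BMat β P S = B at *
  generalize BMat β P (insert j S) = B' at *
  generalize NMat β P S = M at *
  generalize NMat β P (insert j S) = M' at *
  have hrow : ∀ i l, A i j * B j l + ∑ k ∈ Finset.univ.erase j, A i k * B k l = M i l := by
    intro i l
    rw [← hA, Matrix.mul_apply, ← Finset.add_sum_erase _ _ (Finset.mem_univ j)]
  have hvec : ∀ (c : ℝ) (x : N → ℝ) (l : N),
      ((fun k => if k = j then c else x k) ᵥ* B') l
        = c * M j l + ∑ k ∈ Finset.univ.erase j, x k * B k l := by
    intro c x l
    simp only [Matrix.vecMul, dotProduct]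
    rw [← Finset.add_sum_erase _ _ (Finset.mem_univ j)]
    congr 1
    · simp [hBj]
    · refine Finset.sum_congr rfl fun k hk => ?_
      have hne := Finset.ne_of_mem_erase hk
      simp [hne, hB k l hne]
  have hinj : Function.Injective fun v : N → ℝ => v ᵥ* B' :=
    Matrix.vecMul_injective_of_isUnit
      ((Matrix.isUnit_iff_isUnit_det _).mpr (isUnit_iff_ne_zero.mpr hdet))
  have ha : A j j ≠ 0 := by
    intro h0
    have : (fun k => if k = j then (-1 : ℝ) else A j k) = 0 := by
      apply hinj
      funext l
      simp only [hvec, Matrix.zero_vecMul, Pi.zero_apply]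
      have := hrow j l
      rw [h0] at this
      linarith
    have := congrFun this j
    simp at this
  have hA'row : ∀ i, A' i ᵥ* B' = M' i := by
    intro i; funext l
    rw [← hAT]; rfl
  have hjrow : A' j = fun k => if k = j then 1 / A j j else -A j k / A j j := by
    apply hinj
    funext l
    simp only [hvec, hA'row, hNj]
    rw [← hrow j l]
    have : ∑ k ∈ Finset.univ.erase j, -A j k / A j j * B k l
        = -(∑ k ∈ Finset.univ.erase j, A j k * B k l) / A j j := by
      rw [← Finset.sum_neg_distrib, Finset.sum_div]
      refine Finset.sum_congr rfl fun k _ => by ring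
    rw [this]
    field_simp
    ring
  have hirow : ∀ i, i ≠ j → A' i = fun k => if k = j then A i j / A j j
      else A i k - A i j * A j k / A j j := by
    intro i hi
    apply hinj
    funext l
    simp only [hvec, hA'row, hN i l hi]
    rw [← hrow j l, ← hrow i l]
    have : ∑ k ∈ Finset.univ.erase j, (A i k - A i j * A j k / A j j) * B k l
        = ∑ k ∈ Finset.univ.erase j, A i k * B k l
          - A i j / A j j * ∑ k ∈ Finset.univ.erase j, A j k * B k l := by
      rw [Finset.mul_sum, ← Finset.sum_sub_distrib]
      refine Finset.sum_congr rfl fun k _ => by ring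
    rw [this]
    field_simp
    ring
  refine ⟨ha, ?_, ?_, ?_, ?_⟩
  · intro i k hi hk
    simp [hirow i hi, hk]
  · intro i hi
    simp [hirow i hi]
  · intro k hk
    simp [hjrow, hk]
  · simp [hjrow]
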